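/- For all x, y ∈ 𝓡, Ψ(x ⊕ y) ∼ Ψ(x) ⊕ Ψ(y). -/

import Mathlib

/-- The ambient space `𝓡` of decimal representations: an integer part together
with a sequence of digits in `{0,…,9}`. -/
abbrev DecimalRep := ℤ × (ℕ → Fin 10)

namespace DecimalRep

open scoped Classical

/-- The truncation `[x]_k = x₀ + ∑_{i=1}^k x_i / 10^i` of `x` up to the `k`-th
digit, as a rational number. -/
def trunc (x : DecimalRep) (k : ℕ) : ℚ :=
  (x.1 : ℚ) + ∑ i ∈ Finset.range k, ((x.2 i : ℕ) : ℚ) / 10 ^ (i + 1)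

/-- The order `⪯` on `𝓡`: `x ⪯ y` iff every truncation of `x` is at most the
corresponding truncation of `y`. -/
def le (x y : DecimalRep) : Prop := ∀ k : ℕ, trunc x k ≤ trunc y k

/-- The strict order `≺` on `𝓡`. -/
def lt (x y : DecimalRep) : Prop := le x y ∧ x ≠ y

/-- Two decimal representations are equivalent ("have no gap") iff there is no
third element lying between them. -/
def equiv (x y : DecimalRep) : Prop :=
  ¬ ∃ z : DecimalRep, z ≠ x ∧ z ≠ y ∧
      ((le x z ∧ le z y) ∨ (le y z ∧ le z x))

/-- `𝓡₉`: decimal representations ending in an infinite string of nines. -/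
def allNines (x : DecimalRep) : Prop := ∃ N : ℕ, ∀ k ≥ N, x.2 k = 9

/-- `ℚ_F`: decimal representations ending in an infinite string of zeros. -/
def finiteDec (x : DecimalRep) : Prop := ∃ N : ℕ, ∀ k ≥ N, x.2 k = 0

/-- The decimal expansion map `ι : ℚ → 𝓡`, satisfying
`[ι(α)]_k = ⌊10^k·α⌋/10^k` for all `k`. -/
def iota (α : ℚ) : DecimalRep :=
  (⌊α⌋, fun k => ⟨(⌊α * 10 ^ (k + 1)⌋ % 10).toNat, by
    have h1 : (0 : ℤ) ≤ ⌊α * 10 ^ (k + 1)⌋ % 10 := Int.emod_nonneg _ (by norm_num)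
    have h2 : ⌊α * 10 ^ (k + 1)⌋ % 10 < 10 := Int.emod_lt_of_pos _ (by norm_num)
    omega⟩)

/-- `M` is a least upper bound of `W` in `(𝓡,⪯)`. -/
def IsLub (W : Set DecimalRep) (M : DecimalRep) : Prop :=
  (∀ w ∈ W, le w M) ∧ ∀ M' : DecimalRep, (∀ w ∈ W, le w M') → le M M'

/-- `M` is a greatest lower bound of `W` in `(𝓡,⪯)`. -/
def IsGlb (W : Set DecimalRep) (M : DecimalRep) : Prop :=
  (∀ w ∈ W, le M w) ∧ ∀ M' : DecimalRep, (∀ w ∈ W, le M' w) → le M' M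

/-- The least upper bound of a set in `(𝓡,⪯)` (junk value if none exists). -/
noncomputable def sup (W : Set DecimalRep) : DecimalRep :=
  if h : ∃ M, IsLub W M then h.choose else default

/-- The greatest lower bound of a set in `(𝓡,⪯)` (junk value if none exists). -/
noncomputable def inf (W : Set DecimalRep) : DecimalRep :=
  if h : ∃ M, IsGlb W M then h.choose else default

/-- Addition `x ⊕ y := sup {ι([x]_k + [y]_k) : k ∈ ℕ}` on `𝓡`. -/
noncomputable def add (x y : DecimalRep) : DecimalRep :=
  sup { z | ∃ k : ℕ, z = iota (trunc x k + trunc y k) }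

/-- The "additive inverse" map `Ψ(x₀.x₁x₂⋯) = (−1−x₀).(9−x₁)(9−x₂)⋯`. -/
def psi (x : DecimalRep) : DecimalRep :=
  (-1 - x.1, fun k => ⟨9 - (x.2 k).val, by have := (x.2 k).isLt; omega⟩)

/-- The signal map: `0` on the nonnegative part, `1` on the negative part. -/
noncomputable def sign (x : DecimalRep) : ℕ :=
  if le (iota 0) x then 0 else 1

/-- The absolute value `‖x‖ := max {x, Ψ(x)}` with respect to `⪯`. -/
noncomputable def norm (x : DecimalRep) : DecimalRep :=
  if le x (psi x) then psi x else x

/-- Multiplication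
`x ⊗ y := Ψ^(sign x + sign y) (sup {ι([‖x‖]_k · [‖y‖]_k) : k ∈ ℕ})` on `𝓡`. -/
noncomputable def mul (x y : DecimalRep) : DecimalRep :=
  psi^[sign x + sign y]
    (sup { z | ∃ k : ℕ, z = iota (trunc (norm x) k * trunc (norm y) k) })

/-- The multiplicative inverse
`x⁻¹ := Ψ^(sign x) (inf {ι(1/[‖x‖]_k) : k ∈ ℕ, [‖x‖]_k > 0})`. -/
noncomputable def inv (x : DecimalRep) : DecimalRep :=
  psi^[sign x]
    (inf { z | ∃ k : ℕ, 0 < trunc (norm x) k ∧ z = iota (1 / trunc (norm x) k) })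

/-- A sequence of rationals is Cauchy. -/
def IsCauchy (x : ℕ → ℚ) : Prop :=
  ∀ ε : ℚ, 0 < ε → ∃ N : ℕ, ∀ m n : ℕ, N ≤ m → N ≤ n → |x m - x n| < ε

/-- The upper limit `inf { sup {f k : k ≥ n} : n ∈ ℕ }` of a sequence in `𝓡`. -/
noncomputable def upperLimit (f : ℕ → DecimalRep) : DecimalRep :=
  inf { z | ∃ n : ℕ, z = sup { w | ∃ k : ℕ, n ≤ k ∧ w = f k } }

/-- The lower limit `sup { inf {f k : k ≥ n} : n ∈ ℕ }` of a sequence in `𝓡`. -/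
noncomputable def lowerLimit (f : ℕ → DecimalRep) : DecimalRep :=
  sup { z | ∃ n : ℕ, z = inf { w | ∃ k : ℕ, n ≤ k ∧ w = f k } }

end DecimalRep

namespace DecimalRep

def TT (x : DecimalRep) : ℕ → ℤ
  | 0 => x.1
  | n + 1 => 10 * TT x n + ((x.2 n : ℕ) : ℤ)

lemma trunc_eq (x : DecimalRep) (k : ℕ) : trunc x k = (TT x k : ℚ) / 10 ^ k := by
  induction k with
  | zero => simp [trunc, TT]
  | succ n ih =>
    have h : trunc x (n + 1) = trunc x n + ((x.2 n : ℕ) : ℚ) / 10 ^ (n + 1) := by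
      simp only [trunc, Finset.sum_range_succ]; ring
    rw [h, ih]
    simp only [TT]
    push_cast
    field_simp
    ring

lemma le_iff (x y : DecimalRep) : le x y ↔ ∀ k, TT x k ≤ TT y k := by
  unfold le
  refine forall_congr' fun k => ?_
  rw [trunc_eq, trunc_eq, div_le_div_iff_of_pos_right (by positivity)]
  exact_mod_cast Iff.rfl

lemma TT_inj {x y : DecimalRep} (h : ∀ k, TT x k = TT y k) : x = y := by
  refine Prod.ext (h 0) (funext fun n => ?_)
  have h1 := h n
  have h2 := h (n + 1)
  simp only [TT] at h2
  apply Fin.ext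
  omega

lemma TT_psi (x : DecimalRep) (k : ℕ) : TT (psi x) k = -1 - TT x k := by
  induction k with
  | zero => simp [TT, psi]
  | succ n ih =>
    have h : (((psi x).2 n : ℕ)) = 9 - (x.2 n : ℕ) := rfl
    have := (x.2 n).isLt
    simp only [TT, h, ih]
    omega

lemma floor_step (α : ℚ) (n : ℕ) : ⌊α * 10 ^ (n + 1)⌋ / 10 = ⌊α * 10 ^ n⌋ := by
  have := Int.floor_div_natCast (α * 10 ^ (n + 1)) 10
  rw [show α * 10 ^ n = α * 10 ^ (n + 1) / ((10 : ℕ) : ℚ) by push_cast; field_simp; ring, this]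
  rfl

lemma TT_iota (α : ℚ) (k : ℕ) : TT (iota α) k = ⌊α * 10 ^ k⌋ := by
  induction k with
  | zero => simp [TT, iota]
  | succ n ih =>
    have h : (((iota α).2 n : ℕ)) = (⌊α * 10 ^ (n + 1)⌋ % 10).toNat := rfl
    have := floor_step α n
    simp only [TT, h, ih]
    omega

lemma exists_TT (S : ℕ → ℤ) (hS : ∀ n, S (n + 1) / 10 = S n) :
    ∃ M : DecimalRep, ∀ n, TT M n = S n := by
  refine ⟨(S 0, fun n => ⟨(S (n + 1) % 10).toNat, by omega⟩), fun n => ?_⟩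
  induction n with
  | zero => rfl
  | succ n ih =>
    have := hS n
    simp only [TT, ih]
    omega

lemma TT_mono_bound (x : DecimalRep) (n j : ℕ) :
    TT x n * 10 ^ j ≤ TT x (n + j) ∧ TT x (n + j) < (TT x n + 1) * 10 ^ j := by
  induction j with
  | zero => simp
  | succ j ih =>
    have := (x.2 (n + j)).isLt
    rw [← add_assoc]
    simp only [TT, pow_succ, ← mul_assoc]
    omega

lemma trunc_mono (x : DecimalRep) {n k : ℕ} (h : n ≤ k) : trunc x n ≤ trunc x k := by
  obtain ⟨j, rfl⟩ := Nat.exists_eq_add_of_le h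
  rw [trunc_eq, trunc_eq, div_le_div_iff₀ (by positivity) (by positivity)]
  have := (TT_mono_bound x n j).1
  have h2 : (TT x n : ℚ) * 10 ^ j ≤ TT x (n + j) := by exact_mod_cast this
  rw [pow_add]
  have h3 : (0 : ℚ) < 10 ^ n := by positivity
  nlinarith

lemma trunc_lt (x : DecimalRep) (n k : ℕ) : trunc x k * 10 ^ n < TT x n + 1 := by
  have key : trunc x (n + k) * 10 ^ n < TT x n + 1 := by
    have := (TT_mono_bound x n k).2
    have h2 : (TT x (n + k) : ℚ) < (TT x n + 1) * 10 ^ k := by exact_mod_cast this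
    rw [trunc_eq, pow_add, div_mul_eq_mul_div, div_lt_iff₀ (by positivity)]
    have h3 : (0 : ℚ) < 10 ^ n := by positivity
    nlinarith
  refine lt_of_le_of_lt ?_ key
  exact mul_le_mul_of_nonneg_right (trunc_mono x (Nat.le_add_left k n)) (by positivity)

lemma floor_lt (x y : DecimalRep) (n k : ℕ) :
    ⌊(trunc x k + trunc y k) * 10 ^ n⌋ ≤ TT x n + TT y n + 1 := by
  have h : ⌊(trunc x k + trunc y k) * 10 ^ n⌋ < TT x n + TT y n + 2 := by
    rw [Int.floor_lt]
    push_cast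
    have h1 := trunc_lt x n k
    have h2 := trunc_lt y n k
    linarith
  omega

lemma floor_self (x y : DecimalRep) (n : ℕ) :
    ⌊(trunc x n + trunc y n) * 10 ^ n⌋ = TT x n + TT y n := by
  rw [trunc_eq, trunc_eq, ← add_div, div_mul_cancel₀ _ (by positivity)]
  exact_mod_cast Int.floor_intCast (R := ℚ) (TT x n + TT y n)

lemma add_isLub (x y : DecimalRep) :
    IsLub { z | ∃ k : ℕ, z = iota (trunc x k + trunc y k) } (add x y) ∧
    ∃ M, IsLub { z | ∃ k : ℕ, z = iota (trunc x k + trunc y k) } M ∧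
      ∀ n, TT x n + TT y n ≤ TT M n ∧ TT M n ≤ TT x n + TT y n + 1 := by
  have hmax : ∀ n, ∃ k, ∀ j, ⌊(trunc x j + trunc y j) * 10 ^ n⌋ ≤
      ⌊(trunc x k + trunc y k) * 10 ^ n⌋ := by
    intro n
    obtain ⟨m, ⟨k, hk⟩, hm⟩ := Int.exists_greatest_of_bdd
      (P := fun z => ∃ k, ⌊(trunc x k + trunc y k) * 10 ^ n⌋ = z)
      ⟨TT x n + TT y n + 1, by rintro z ⟨k, rfl⟩; exact floor_lt x y n k⟩ ⟨_, 0, rfl⟩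
    exact ⟨k, fun j => by rw [hk]; exact hm _ ⟨j, rfl⟩⟩
  choose K hK using hmax
  obtain ⟨M, hM⟩ := exists_TT (fun n => ⌊(trunc x (K n) + trunc y (K n)) * 10 ^ n⌋) (by
    intro n
    have h1 := floor_step (trunc x (K n) + trunc y (K n)) n
    have h2 := floor_step (trunc x (K (n+1)) + trunc y (K (n+1))) n
    have h3 := hK n (K (n+1))
    have h4 := hK (n+1) (K n)
    omega)
  have hL : IsLub { z | ∃ k : ℕ, z = iota (trunc x k + trunc y k) } M := by
    constructor
    · rintro w ⟨k, rfl⟩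
      rw [le_iff]
      intro n
      rw [TT_iota, hM]
      exact hK n k
    · intro M' h
      rw [le_iff]
      intro n
      have := (le_iff _ _).1 (h _ ⟨K n, rfl⟩) n
      rw [TT_iota] at this
      rw [hM]
      exact this
  refine ⟨?_, M, hL, fun n => ?_⟩
  · have he : ∃ M, IsLub { z | ∃ k : ℕ, z = iota (trunc x k + trunc y k) } M := ⟨M, hL⟩
    unfold add sup
    rw [dif_pos he]
    exact he.choose_spec
  · rw [hM]
    refine ⟨?_, floor_lt x y n _⟩
    rw [← floor_self]
    exact hK n n

lemma TT_add (x y : DecimalRep) (n : ℕ) :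
    TT x n + TT y n ≤ TT (add x y) n ∧ TT (add x y) n ≤ TT x n + TT y n + 1 := by
  obtain ⟨h1, M, h2, h3⟩ := add_isLub x y
  have a := (le_iff _ _).1 (h1.2 M h2.1) n
  have b := (le_iff _ _).1 (h2.2 _ h1.1) n
  have := h3 n
  omega

lemma lt_persist {x y : DecimalRep} (h : le x y) (hne : x ≠ y) :
    ∃ n, ∀ m, n ≤ m → TT x m + 1 ≤ TT y m := by
  rw [le_iff] at h
  have : ∃ n, TT x n ≠ TT y n := by
    by_contra hc
    push Not at hc
    exact hne (TT_inj hc)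
  obtain ⟨n, hn⟩ := this
  refine ⟨n, fun m hm => ?_⟩
  induction m, hm using Nat.le_induction with
  | base => have := h n; omega
  | succ m hm ih =>
    have := (x.2 m).isLt
    simp only [TT]
    omega

lemma no_between {u v z : DecimalRep} (h : ∀ n, TT v n ≤ TT u n + 1)
    (hu : z ≠ u) (hv : z ≠ v) (h1 : le u z) (h2 : le z v) : False := by
  obtain ⟨n, hn⟩ := lt_persist h1 hu.symm
  obtain ⟨m, hm⟩ := lt_persist h2 hv
  have a := hn (max n m) (le_max_left _ _)
  have b := hm (max n m) (le_max_right _ _)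
  have := h (max n m)
  omega

end DecimalRep

open DecimalRep in
/-- `Ψ(x ⊕ y) ∼ Ψ(x) ⊕ Ψ(y)`. -/
theorem psi_add_equiv (x y : DecimalRep) :
    equiv (psi (add x y)) (add (psi x) (psi y)) := by
  rintro ⟨z, hu, hv, ⟨h1, h2⟩ | ⟨h1, h2⟩⟩
  · refine no_between (fun n => ?_) hu hv h1 h2
    have a := TT_add x y n
    have b := TT_add (psi x) (psi y) n
    simp only [TT_psi] at *
    omega
  · refine no_between (fun n => ?_) hv hu h1 h2
    have a := TT_add x y n
    have b := TT_add (psi x) (psi y) n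
    simp only [TT_psi] at *
    omega
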